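/- Let (X,T) be a distal minimal topological dynamical system and let (x0,x1,x2,x3) ∈ X⁴. Then (x0,x1,x2,x3) ∈ 𝒫 if and only if there exist two sequences of integers (m_i) and (n_i) such that T^{m_i} x0 → x1, T^{n_i} x0 → x2 and T^{m_i+n_i} x0 → x3 as i → ∞. -/

import Mathlib

open Filter Topology

/-- The `n`-th iterate (`n : ℤ`) of a homeomorphism `T : X → X`. -/
def iterZ {X : Type*} [TopologicalSpace X] (T : X ≃ₜ X) (n : ℤ) : X → X :=
  fun x => (T.toEquiv ^ n) x

section Defs

variable {X : Type*} [TopologicalSpace X]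

/-- The set of parallelograms `𝒫`: the closure in `X⁴` of
`{(x, Tᵐx, Tⁿx, Tᵐ⁺ⁿx) : x ∈ X, m, n ∈ ℤ}`. -/
def Para (T : X ≃ₜ X) : Set (X × X × X × X) :=
  closure {q | ∃ (x : X) (m n : ℤ),
    q = (x, iterZ T m x, iterZ T n x, iterZ T (m + n) x)}

/-- The set of parallelepipeds `𝒬`: the closure in `X⁸ = X⁴ × X⁴` of
`{(x, Tᵐx, Tⁿx, Tᵐ⁺ⁿx, Tᵖx, Tᵐ⁺ᵖx, Tⁿ⁺ᵖx, Tᵐ⁺ⁿ⁺ᵖx) : x ∈ X, m, n, p ∈ ℤ}`. -/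
def Pip (T : X ≃ₜ X) : Set ((X × X × X × X) × (X × X × X × X)) :=
  closure {q | ∃ (x : X) (m n p : ℤ),
    q = ((x, iterZ T m x, iterZ T n x, iterZ T (m + n) x),
         (iterZ T p x, iterZ T (m + p) x, iterZ T (n + p) x, iterZ T (m + n + p) x))}

end Defs

section MetricDefs

variable {X : Type*} [MetricSpace X]

/-- `(X, T)` is transitive: some point has dense orbit `{Tⁿx : n ∈ ℤ}`. -/
def IsTransitive (T : X ≃ₜ X) : Prop :=
  ∃ x : X, Dense (Set.range fun n : ℤ => iterZ T n x)

/-- `(X, T)` is minimal: every point has dense orbit. -/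
def IsMinimal (T : X ≃ₜ X) : Prop :=
  ∀ x : X, Dense (Set.range fun n : ℤ => iterZ T n x)

/-- `(x, y)` is a proximal pair: `inf_{n ∈ ℤ} d(Tⁿx, Tⁿy) = 0`. -/
def ProximalPair (T : X ≃ₜ X) (x y : X) : Prop :=
  ⨅ n : ℤ, dist (iterZ T n x) (iterZ T n y) = 0

/-- `(X, T)` is distal: every pair of distinct points is distal,
i.e. `inf_{n ∈ ℤ} d(Tⁿx, Tⁿy) > 0`. -/
def IsDistal (T : X ≃ₜ X) : Prop :=
  ∀ x y : X, x ≠ y → 0 < ⨅ n : ℤ, dist (iterZ T n x) (iterZ T n y)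

/-- The regionally proximal relation `RP`. -/
def RP (T : X ≃ₜ X) (x y : X) : Prop :=
  ∀ ε > 0, ∃ x' y' : X, ∃ n : ℤ,
    dist x' x < ε ∧ dist y' y < ε ∧ dist (iterZ T n x') (iterZ T n y') < ε

/-- The doubly regionally proximal relation `RP²`. -/
def RP2 (T : X ≃ₜ X) (x y : X) : Prop :=
  ∀ ε > 0, ∃ x' y' : X, ∃ m n : ℤ,
    dist x' x < ε ∧ dist y' y < ε ∧
    dist (iterZ T m x') (iterZ T m y') < ε ∧
    dist (iterZ T n x') (iterZ T n y') < ε ∧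
    dist (iterZ T (m + n) x') (iterZ T (m + n) y') < ε

/-- The strongly doubly regionally proximal relation `RP²ₛ`. -/
def RP2S (T : X ≃ₜ X) (x y : X) : Prop :=
  ∀ ε > 0, ∃ x' y' : X, ∃ m n : ℤ,
    dist x' x < ε ∧ dist y' y < ε ∧
    dist (iterZ T m x') y < ε ∧ dist (iterZ T n x') y < ε ∧
    dist (iterZ T (m + n) x') y < ε ∧
    dist (iterZ T m y') y < ε ∧ dist (iterZ T n y') y < ε ∧
    dist (iterZ T (m + n) y') y < ε

end MetricDefs

/-!
A distal action on a compact space has symmetric orbit closures: the identity is the only idempotent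
of its Ellis semigroup, which is therefore a group. Applied to the face transformations
`(a, b, c) ↦ (Tᵐa, Tⁿb, Tᵐ⁺ⁿc)` on `X³`, this reduces the theorem to the claim that any two points
of a fibre `{a ∈ X³ | (x, a) ∈ 𝒫}` lie in each other's face orbit closures, which is then used for
`(x, x, x)` and `(x₁, x₂, x₃)`.

Viewed in `X² × X²`, the set `𝒫` is the closure of the orbit relation of `T × T`. By Baire category
its fibre over a generic point `c ∈ X²` is the `T × T`-orbit closure of `c`, and by distality the
same holds for the points of that orbit closure, one of which has the form `(x, w)` by minimality.
Hence any `(x, a) ∈ 𝒫` can be moved by face transformations to some `(x, w, b)` with `b` in the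
orbit closure of `(x, w)`, and from there to the base point `(x, w, x, w)` by face transformations
with `m = 0`.
-/

section OrbitClosure

variable {M Z : Type*} [AddMonoid M] [TopologicalSpace Z] [AddAction M Z]

theorem closure_orbit_subset_of_isClosed {s : Set Z} (hs : IsClosed s)
    (hinv : ∀ (m : M), ∀ z ∈ s, m +ᵥ z ∈ s) {a : Z} (ha : a ∈ s) :
    closure (AddAction.orbit M a) ⊆ s :=
  closure_minimal (Set.range_subset_iff.2 fun m => hinv m a ha) hs

theorem closure_orbit_subset_closure_orbit [ContinuousConstVAdd M Z] {a b : Z}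
    (hb : b ∈ closure (AddAction.orbit M a)) :
    closure (AddAction.orbit M b) ⊆ closure (AddAction.orbit M a) :=
  closure_orbit_subset_of_isClosed isClosed_closure
    (fun m _ hz => vadd_closure_orbit_subset m a (Set.vadd_mem_vadd_set hz)) hb

theorem closure_orbit_map_subset_image [CompactSpace Z] {G X : Type*} [AddMonoid G]
    [TopologicalSpace X] [T2Space X] [AddAction G X] {f : Z → X} (hf : Continuous f) {a : Z}
    (hfa : AddAction.orbit G (f a) ⊆ f '' AddAction.orbit M a) :
    closure (AddAction.orbit G (f a)) ⊆ f '' closure (AddAction.orbit M a) :=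
  (closure_mono hfa).trans (hf.isClosedMap.closure_image_subset _)

theorem exists_mem_closure_orbit_map_eq [CompactSpace Z] {G X : Type*} [AddMonoid G]
    [TopologicalSpace X] [T2Space X] [AddAction G X] [AddAction.IsMinimal G X] {f : Z → X}
    (hf : Continuous f) {a : Z} (hfa : AddAction.orbit G (f a) ⊆ f '' AddAction.orbit M a)
    (x : X) : ∃ b ∈ closure (AddAction.orbit M a), f b = x :=
  closure_orbit_map_subset_image hf hfa (AddAction.dense_orbit G (f a) x)

theorem eventually_residual_mem_closure_orbit [SecondCountableTopology Z]
    [ContinuousConstVAdd M Z] :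
    ∀ᶠ z in residual Z, ∀ w, (z, w) ∈ closure {p : Z × Z | p.2 ∈ AddAction.orbit M p.1} →
      w ∈ closure (AddAction.orbit M z) := by
  let visits (U : Set Z) : Set Z := ⋃ m : M, (m +ᵥ ·) ⁻¹' U
  have isOpen_visits {U : Set Z} (hU : IsOpen U) : IsOpen (visits U) :=
    isOpen_iUnion fun m => hU.preimage (continuous_const_vadd m)
  obtain ⟨B, hBc, -, hB⟩ := TopologicalSpace.exists_countable_basis Z
  have generic : ∀ᶠ z in residual Z, ∀ U ∈ B, z ∈ closure (visits U) → z ∈ visits U :=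
    (eventually_countable_ball hBc).2 fun U hU =>
      (closure_residualEq (isOpen_visits (hB.isOpen hU)).isLocallyClosed).mem_iff.mono
        fun _ h => h.1
  filter_upwards [generic] with z hz w hzw
  refine hB.mem_closure_iff.2 fun U hU hwU => ?_
  have hcl : z ∈ closure (visits U) := by
    refine mem_closure_iff.2 fun V hV hzV => ?_
    obtain ⟨⟨a, b⟩, ⟨haV, hbU⟩, m, hm⟩ :=
      mem_closure_iff.1 hzw (V ×ˢ U) (hV.prod (hB.isOpen hU)) ⟨hzV, hwU⟩
    have hmU : m +ᵥ a ∈ U := Set.mem_of_eq_of_mem hm hbU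
    exact ⟨a, haV, Set.mem_iUnion.2 ⟨m, hmU⟩⟩
  obtain ⟨m, hm⟩ := Set.mem_iUnion.1 (hz U hU hcl)
  exact ⟨m +ᵥ z, hm, m, rfl⟩

end OrbitClosure

section Ellis

variable (M Z : Type*) [AddMonoid M] [TopologicalSpace Z] [AddAction M Z]

/-- The Ellis (enveloping) semigroup of an action: the pointwise closure of the translations
`z ↦ m +ᵥ z`, encoded as the orbit closure of the identity for the pointwise action on `Z → Z`. -/
def ellisSemigroup : Set (Z → Z) :=
  closure (AddAction.orbit M (id : Z → Z))

/-- An action is distal if no pair of distinct points has a diagonal point in its orbit closure.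
For a compact metric space this says that distinct points stay at a positive distance under the
action, and it makes sense for an arbitrary topological space. -/
def IsDistalAction : Prop :=
  ∀ ⦃x y z : Z⦄, (z, z) ∈ closure (AddAction.orbit M (x, y)) → x = y

variable {M Z}

theorem apply_mem_closure_orbit_of_mem_ellisSemigroup {p : Z → Z}
    (hp : p ∈ ellisSemigroup M Z) (z : Z) : p z ∈ closure (AddAction.orbit M z) :=
  map_mem_closure (f := fun q : Z → Z => q z) (continuous_apply z) hp (by
    rintro _ ⟨m, rfl⟩
    exact ⟨m, rfl⟩)

theorem exists_mem_ellisSemigroup_apply_eq [CompactSpace Z] [T2Space Z] {x y : Z}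
    (hy : y ∈ closure (AddAction.orbit M x)) : ∃ p ∈ ellisSemigroup M Z, p x = y :=
  closure_orbit_map_subset_image (f := fun q : Z → Z => q x) (a := id) (continuous_apply x)
    (by
      rintro _ ⟨m, rfl⟩
      exact ⟨m +ᵥ id, ⟨m, rfl⟩, rfl⟩) hy

theorem comp_mem_ellisSemigroup [ContinuousConstVAdd M Z] {p q : Z → Z}
    (hp : p ∈ ellisSemigroup M Z) (hq : q ∈ ellisSemigroup M Z) :
    p ∘ q ∈ ellisSemigroup M Z :=
  closure_orbit_subset_closure_orbit hq <|
    map_mem_closure (f := (· ∘ q)) (Pi.continuous_precomp q) hp (by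
      rintro _ ⟨m, rfl⟩
      exact ⟨m, rfl⟩)

theorem exists_comp_idempotent_of_mem_ellisSemigroup [CompactSpace Z] [T2Space Z]
    [ContinuousConstVAdd M Z] {p : Z → Z} (hp : p ∈ ellisSemigroup M Z) :
    ∃ q ∈ ellisSemigroup M Z, (q ∘ p) ∘ (q ∘ p) = q ∘ p := by
  let _ : Semigroup (Z → Z) := { mul := fun f g => f ∘ g, mul_assoc := fun _ _ _ => rfl }
  obtain ⟨_, ⟨q, hq, rfl⟩, hidem⟩ := exists_idempotent_in_compact_subsemigroup
    Pi.continuous_precomp ((· ∘ p) '' ellisSemigroup M Z)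
    ((AddAction.nonempty_orbit _).closure.image _)
    (isClosed_closure.isCompact.image (Pi.continuous_precomp p)) (by
      rintro _ ⟨f, hf, rfl⟩ _ ⟨g, hg, rfl⟩
      exact ⟨f ∘ p ∘ g, comp_mem_ellisSemigroup hf (comp_mem_ellisSemigroup hp hg), rfl⟩)
  exact ⟨q, hq, hidem⟩

namespace IsDistalAction

theorem eq_id_of_idempotent (hd : IsDistalAction M Z) {u : Z → Z}
    (hu : u ∈ ellisSemigroup M Z) (hidem : u ∘ u = u) : u = id := by
  funext z
  have hpair : (u (u z), u z) ∈ closure (AddAction.orbit M (u z, z)) :=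
    map_mem_closure (f := fun q : Z → Z => (q (u z), q z)) (by fun_prop) hu (by
      rintro _ ⟨m, rfl⟩
      exact ⟨m, rfl⟩)
  rw [← Function.comp_apply (f := u), hidem] at hpair
  exact hd hpair

theorem mem_closure_orbit_symm [CompactSpace Z] [T2Space Z] [ContinuousConstVAdd M Z]
    (hd : IsDistalAction M Z) {x y : Z} (hy : y ∈ closure (AddAction.orbit M x)) :
    x ∈ closure (AddAction.orbit M y) := by
  obtain ⟨p, hp, rfl⟩ := exists_mem_ellisSemigroup_apply_eq hy
  obtain ⟨q, hq, hidem⟩ := exists_comp_idempotent_of_mem_ellisSemigroup hp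
  have hqp : q (p x) = x :=
    congrFun (hd.eq_id_of_idempotent (comp_mem_ellisSemigroup hq hp) hidem) x
  simpa only [hqp] using apply_mem_closure_orbit_of_mem_ellisSemigroup hq (p x)

theorem map_eq_map (hd : IsDistalAction M Z) {N Y : Type*} [AddMonoid N]
    [TopologicalSpace Y] [AddAction N Y] {f : Y → Z} (hf : Continuous f)
    (hequiv : ∀ n : N, ∃ m : M, ∀ y, f (n +ᵥ y) = m +ᵥ f y) {x y z : Y}
    (hz : (z, z) ∈ closure (AddAction.orbit N (x, y))) : f x = f y := by
  refine hd (map_mem_closure (f := Prod.map f f) (hf.prodMap hf) hz ?_)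
  rintro _ ⟨n, rfl⟩
  obtain ⟨m, hm⟩ := hequiv n
  exact ⟨m, Prod.ext (hm x).symm (hm y).symm⟩

theorem prod (hd : IsDistalAction M Z) {Y : Type*} [TopologicalSpace Y] [AddAction M Y]
    (hd' : IsDistalAction M Y) : IsDistalAction M (Z × Y) := fun _ _ _ h =>
  Prod.ext (hd.map_eq_map continuous_fst (fun m => ⟨m, fun _ => rfl⟩) h)
    (hd'.map_eq_map continuous_snd (fun m => ⟨m, fun _ => rfl⟩) h)

end IsDistalAction

end Ellis

section FaceGroup

/-- The group of face transformations of parallelograms fixing the first vertex: `(g, h)` acts on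
the remaining three vertices by `(a, b, c) ↦ (g +ᵥ a, h +ᵥ b, (g + h) +ᵥ c)`. It is a type synonym
of `G × G` carrying this action on triples. -/
def FaceGroup (G : Type*) : Type _ :=
  G × G

variable {G X : Type*} [AddCommMonoid G] [AddAction G X]

instance : AddMonoid (FaceGroup G) :=
  inferInstanceAs (AddMonoid (G × G))

instance : AddAction (FaceGroup G) (X × X × X) where
  vadd γ a := (γ.1 +ᵥ a.1, γ.2 +ᵥ a.2.1, (γ.1 + γ.2) +ᵥ a.2.2)
  zero_vadd a := Prod.ext (zero_vadd G a.1)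
    (Prod.ext (zero_vadd G a.2.1) ((congrArg (· +ᵥ a.2.2) (add_zero (0 : G))).trans
      (zero_vadd G a.2.2)))
  add_vadd γ δ a := Prod.ext (add_vadd γ.1 δ.1 a.1)
    (Prod.ext (add_vadd γ.2 δ.2 a.2.1)
      ((congrArg (· +ᵥ a.2.2) (add_add_add_comm γ.1 δ.1 γ.2 δ.2)).trans
        (add_vadd (γ.1 + γ.2) (δ.1 + δ.2) a.2.2)))

theorem FaceGroup.vadd_def (γ : FaceGroup G) (a : X × X × X) :
    γ +ᵥ a = (γ.1 +ᵥ a.1, γ.2 +ᵥ a.2.1, (γ.1 + γ.2) +ᵥ a.2.2) :=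
  rfl

theorem FaceGroup.mk_vadd_mem_orbit (g : G) (a : X) (b : X × X) :
    (a, g +ᵥ b) ∈ AddAction.orbit (FaceGroup G) (a, b) :=
  ⟨(0, g), Prod.ext (zero_vadd G a) (Prod.ext rfl (congrArg (· +ᵥ b.2) (zero_add g)))⟩

variable [TopologicalSpace X]

instance [ContinuousConstVAdd G X] : ContinuousConstVAdd (FaceGroup G) (X × X × X) where
  continuous_const_vadd γ := by
    simp only [FaceGroup.vadd_def]
    fun_prop

theorem IsDistalAction.faceGroup (hd : IsDistalAction G X) :
    IsDistalAction (FaceGroup G) (X × X × X) := fun _ _ _ h =>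
  Prod.ext (hd.map_eq_map continuous_fst (fun γ => ⟨γ.1, fun _ => rfl⟩) h)
    (Prod.ext (hd.map_eq_map continuous_snd.fst (fun γ => ⟨γ.2, fun _ => rfl⟩) h)
      (hd.map_eq_map continuous_snd.snd (fun γ => ⟨γ.1 + γ.2, fun _ => rfl⟩) h))

end FaceGroup

section Parallelograms

variable (G X : Type*) [TopologicalSpace X]

/-- The set of parallelograms of an action, generalizing `Para` from the iterates of one
homeomorphism to a commutative group. -/
def parallelograms [AddCommMonoid G] [AddAction G X] : Set (X × X × X × X) :=
  closure {q | ∃ (x : X) (g h : G), q = (x, g +ᵥ x, h +ᵥ x, (g + h) +ᵥ x)}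

variable {G X}

section AddCommMonoid

variable [AddCommMonoid G] [AddAction G X]

theorem diag_mem_parallelograms (x : X) : (x, x, x, x) ∈ parallelograms G X :=
  subset_closure ⟨x, 0, 0, by simp only [add_zero, zero_vadd]⟩

theorem mem_closure_orbit_rel_of_mem_parallelograms {a b : X × X}
    (h : (a.1, a.2, b) ∈ parallelograms G X) :
    (a, b) ∈ closure {p : (X × X) × (X × X) | p.2 ∈ AddAction.orbit G p.1} := by
  refine map_mem_closure (f := fun q : X × X × X × X => ((q.1, q.2.1), q.2.2)) (by fun_prop) h ?_
  rintro _ ⟨x, g, h, rfl⟩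
  exact ⟨h, by simp only [Prod.vadd_mk, vadd_vadd, add_comm]⟩

theorem exists_parallelograms_fiber_subset_closure_orbit [CompactSpace X] [T2Space X]
    [SecondCountableTopology X] [ContinuousConstVAdd G X] [Nonempty X] :
    ∃ c : X × X, {b : X × X | (c.1, c.2, b) ∈ parallelograms G X} ⊆
      closure (AddAction.orbit G c) := by
  obtain ⟨c, hc⟩ := (dense_of_mem_residual
    (eventually_residual_mem_closure_orbit (M := G) (Z := X × X))).nonempty
  exact ⟨c, fun b hb => hc b (mem_closure_orbit_rel_of_mem_parallelograms hb)⟩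

variable [ContinuousConstVAdd G X]

theorem faceGroup_vadd_mem_parallelograms (γ : FaceGroup G) {x : X} {a : X × X × X}
    (h : (x, a) ∈ parallelograms G X) : (x, γ +ᵥ a) ∈ parallelograms G X := by
  refine map_mem_closure (f := fun q : X × X × X × X => (q.1, γ +ᵥ q.2)) (by fun_prop) h ?_
  rintro _ ⟨y, g, h, rfl⟩
  exact ⟨y, γ.1 + g, γ.2 + h, by
    simp only [FaceGroup.vadd_def, vadd_vadd, add_add_add_comm]⟩

theorem mem_parallelograms_of_mem_closure_orbit_faceGroup {x : X} {a b : X × X × X}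
    (h : (x, a) ∈ parallelograms G X) (hb : b ∈ closure (AddAction.orbit (FaceGroup G) a)) :
    (x, b) ∈ parallelograms G X :=
  closure_orbit_subset_of_isClosed (s := {b | (x, b) ∈ parallelograms G X})
    (isClosed_closure.preimage (by fun_prop))
    (fun γ _ => faceGroup_vadd_mem_parallelograms γ) h hb

end AddCommMonoid

variable [AddCommGroup G] [AddAction G X] [ContinuousConstVAdd G X]

theorem vadd_left_mem_parallelograms (k : G) {a b : X × X}
    (h : (a.1, a.2, b) ∈ parallelograms G X) :
    (k +ᵥ a.1, k +ᵥ a.2, b) ∈ parallelograms G X := by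
  refine map_mem_closure
    (f := fun q : X × X × X × X => (k +ᵥ q.1, k +ᵥ q.2.1, q.2.2)) (by fun_prop) h ?_
  rintro _ ⟨y, g, h, rfl⟩
  refine ⟨k +ᵥ y, g, h - k, ?_⟩
  simp only [vadd_vadd, add_comm k g, sub_add_cancel, add_assoc]

theorem mem_parallelograms_of_mem_closure_orbit_left {a b c : X × X}
    (h : (a.1, a.2, c) ∈ parallelograms G X) (hb : b ∈ closure (AddAction.orbit G a)) :
    (b.1, b.2, c) ∈ parallelograms G X :=
  closure_orbit_subset_of_isClosed (s := {b : X × X | (b.1, b.2, c) ∈ parallelograms G X})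
    (isClosed_closure.preimage (by fun_prop))
    (fun k _ => vadd_left_mem_parallelograms k) h hb

namespace IsDistalAction

variable [CompactSpace X] [T2Space X] [SecondCountableTopology X] [AddAction.IsMinimal G X]

theorem exists_forall_mem_closure_orbit_of_mem_parallelograms (hd : IsDistalAction G X) (x : X) :
    ∃ w : X, ∀ b : X × X, (x, w, b) ∈ parallelograms G X →
      (x, w) ∈ closure (AddAction.orbit G b) := by
  have : Nonempty X := ⟨x⟩
  obtain ⟨c, hc⟩ := exists_parallelograms_fiber_subset_closure_orbit (G := G) (X := X)
  obtain ⟨⟨_, w⟩, hw, rfl⟩ : ∃ p ∈ closure (AddAction.orbit G c), p.1 = x :=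
    exists_mem_closure_orbit_map_eq (G := G) continuous_fst (by
      rintro _ ⟨g, rfl⟩
      exact ⟨g +ᵥ c, ⟨g, rfl⟩, rfl⟩) x
  refine ⟨w, fun b hb => ?_⟩
  have hcb : (c.1, c.2, b) ∈ parallelograms G X :=
    mem_parallelograms_of_mem_closure_orbit_left hb ((hd.prod hd).mem_closure_orbit_symm hw)
  exact closure_orbit_subset_closure_orbit ((hd.prod hd).mem_closure_orbit_symm (hc hcb)) hw

theorem exists_forall_mem_closure_orbit_faceGroup (hd : IsDistalAction G X)
    (x : X) : ∃ w : X, ∀ a : X × X × X, (x, a) ∈ parallelograms G X →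
      (w, x, w) ∈ closure (AddAction.orbit (FaceGroup G) a) := by
  obtain ⟨w, hw⟩ := hd.exists_forall_mem_closure_orbit_of_mem_parallelograms x
  refine ⟨w, fun a ha => ?_⟩
  obtain ⟨⟨w, b⟩, hb, rfl⟩ : ∃ p ∈ closure (AddAction.orbit (FaceGroup G) a), p.1 = w :=
    exists_mem_closure_orbit_map_eq (G := G) continuous_fst (by
      rintro _ ⟨g, rfl⟩
      exact ⟨_, ⟨(g, 0), rfl⟩, rfl⟩) w
  refine closure_orbit_subset_closure_orbit hb ?_
  refine map_mem_closure (Continuous.prodMk_right _)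
    (hw b (mem_parallelograms_of_mem_closure_orbit_faceGroup ha hb)) ?_
  rintro _ ⟨g, rfl⟩
  exact FaceGroup.mk_vadd_mem_orbit g w b

theorem mem_closure_orbit_faceGroup (hd : IsDistalAction G X) {x : X} {a b : X × X × X}
    (ha : (x, a) ∈ parallelograms G X) (hb : (x, b) ∈ parallelograms G X) :
    b ∈ closure (AddAction.orbit (FaceGroup G) a) := by
  obtain ⟨w, hw⟩ := hd.exists_forall_mem_closure_orbit_faceGroup x
  exact closure_orbit_subset_closure_orbit (hw a ha)
    (hd.faceGroup.mem_closure_orbit_symm (hw b hb))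

end IsDistalAction

end Parallelograms

theorem stmt10_general {G X : Type*} [AddCommGroup G] [TopologicalSpace X] [CompactSpace X]
    [T2Space X] [SecondCountableTopology X] [AddAction G X] [ContinuousConstVAdd G X]
    [AddAction.IsMinimal G X] (hd : IsDistalAction G X) (x0 x1 x2 x3 : X) :
    (x0, x1, x2, x3) ∈ parallelograms G X ↔
      ∃ g h : ℕ → G,
        Tendsto (fun i => g i +ᵥ x0) atTop (𝓝 x1) ∧
        Tendsto (fun i => h i +ᵥ x0) atTop (𝓝 x2) ∧
        Tendsto (fun i => (g i + h i) +ᵥ x0) atTop (𝓝 x3) := by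
  constructor
  · intro hx
    obtain ⟨s, hs, hlim⟩ := mem_closure_iff_seq_limit.1
      (hd.mem_closure_orbit_faceGroup (diag_mem_parallelograms x0) hx)
    choose γ hγ using hs
    obtain rfl : (fun i => γ i +ᵥ (x0, x0, x0)) = s := funext hγ
    exact ⟨fun i => (γ i).1, fun i => (γ i).2, hlim.fst_nhds, hlim.snd_nhds.fst_nhds,
      hlim.snd_nhds.snd_nhds⟩
  · rintro ⟨g, h, h1, h2, h3⟩
    exact mem_closure_of_tendsto
      (tendsto_const_nhds.prodMk_nhds (h1.prodMk_nhds (h2.prodMk_nhds h3)))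
      (Eventually.of_forall fun i => ⟨x0, g i, h i, rfl⟩)

section Iterates

variable {X : Type*}

theorem continuous_iterZ [TopologicalSpace X] (T : X ≃ₜ X) (n : ℤ) : Continuous (iterZ T n) := by
  let toPerm : (X ≃ₜ X) →* Equiv.Perm X := ⟨⟨Homeomorph.toEquiv, rfl⟩, fun _ _ => rfl⟩
  have hpow : (T ^ n).toEquiv = T.toEquiv ^ n := map_zpow toPerm T n
  exact (T ^ n).continuous.congr fun x => congrArg (fun e : Equiv.Perm X => e x) hpow

/-- The action of `ℤ` on `X` by the iterates of `T`. It is not an instance, because it depends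
on `T`. -/
abbrev iterAction [TopologicalSpace X] (T : X ≃ₜ X) : AddAction ℤ X where
  vadd := iterZ T
  zero_vadd x := congrArg (fun e : Equiv.Perm X => e x) (zpow_zero T.toEquiv)
  add_vadd m n x := congrArg (fun e : Equiv.Perm X => e x) (zpow_add T.toEquiv m n)

theorem continuousConstVAdd_iterAction [TopologicalSpace X] (T : X ≃ₜ X) :
    let _ := iterAction T
    ContinuousConstVAdd ℤ X :=
  let _ := iterAction T
  ⟨continuous_iterZ T⟩

theorem IsDistal.isDistalAction_iterAction [MetricSpace X] {T : X ≃ₜ X} (hT : IsDistal T) :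
    let _ := iterAction T
    IsDistalAction ℤ X := by
  intro _ x y z hz
  by_contra hxy
  let δ := ⨅ n : ℤ, dist (iterZ T n x) (iterZ T n y)
  have hδ (n : ℤ) : δ ≤ dist (iterZ T n x) (iterZ T n y) :=
    ciInf_le ⟨0, Set.forall_mem_range.2 fun _ => dist_nonneg⟩ n
  have hzz : δ ≤ dist z z :=
    closure_minimal (t := {p : X × X | δ ≤ dist p.1 p.2}) (Set.range_subset_iff.2 hδ)
      (isClosed_le continuous_const continuous_dist) hz
  exact absurd (hT x y hxy) (not_lt.2 (hzz.trans_eq (dist_self z)))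

end Iterates

/-- In a distal minimal system, `(x0,x1,x2,x3) ∈ 𝒫` iff there are integer sequences
`(mᵢ)`, `(nᵢ)` with `T^{mᵢ}x0 → x1`, `T^{nᵢ}x0 → x2` and `T^{mᵢ+nᵢ}x0 → x3`. -/
theorem stmt10 {X : Type*} [MetricSpace X] [CompactSpace X] [Nonempty X]
    (T : X ≃ₜ X) (hdistal : IsDistal T) (hmin : IsMinimal T) (x0 x1 x2 x3 : X) :
    (x0, x1, x2, x3) ∈ Para T ↔
      ∃ m n : ℕ → ℤ,
        Tendsto (fun i => iterZ T (m i) x0) atTop (𝓝 x1) ∧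
        Tendsto (fun i => iterZ T (n i) x0) atTop (𝓝 x2) ∧
        Tendsto (fun i => iterZ T (m i + n i) x0) atTop (𝓝 x3) := by
  let _ := iterAction T
  have := continuousConstVAdd_iterAction T
  have : AddAction.IsMinimal ℤ X := ⟨hmin⟩
  exact stmt10_general hdistal.isDistalAction_iterAction x0 x1 x2 x3
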